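/- arXiv:1805.05460 — 4 statements merged into one kernel-verified Lean document; each statement's English description precedes it below -/
import Mathlib

section
/- Let η : ℝ × ℝ³ → ℝ³ be of class C² and suppose that for each t the map η(t, ·) : ℝ³ → ℝ³ is a bijection whose spatial derivative D_x η(t, x) is invertible with det D_x η(t, x) = 1 for all x, and whose inverse map is differentiable. Then the spatial velocity field v(t, y) = ∂_t η(t, η(t,·)⁻¹(y)) is divergence-free: for every t and every y ∈ ℝ³, div_y v(t, y) = 0. -/
/-!
Differentiating `det D_x η(s, x)` in `s` with Jacobi's formula and exchanging `∂_t` with `D_x`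
gives Euler's expansion formula `∂_t det D_x η(t, x) = det D_x η(t, x) * div v(t, η(t, x))`.
A motion with constant Jacobian determinant therefore has `div v = 0`, the determinant being
nonzero because the derivative of the inverse motion inverts `D_x η`.
-/

open Filter Topology
open ContinuousLinearMap (inr)

section Jacobi

variable {𝕜 : Type*} [NontriviallyNormedField 𝕜] {t : 𝕜}

theorem sum_det_updateRow_eq_trace_adjugate_mul {n R : Type*} [Fintype n] [DecidableEq n]
    [CommRing R] (A B : Matrix n n R) :
    ∑ i, (A.updateRow i (B i)).det = (A.adjugate * B).trace := by
  have det_updateRow_eq (i : n) : (A.updateRow i (B i)).det = (B * A.adjugate) i i := by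
    rw [← Matrix.cramer_transpose_apply, Matrix.cramer_eq_adjugate_mulVec,
      ← Matrix.adjugate_transpose, Matrix.mulVec_transpose]
    rfl
  rw [Matrix.trace_mul_comm]
  exact Finset.sum_congr rfl fun i _ => det_updateRow_eq i

theorem hasDerivAt_matrix_det {n : Type*} [Fintype n] [DecidableEq n] {A : 𝕜 → Matrix n n 𝕜}
    {A' : Matrix n n 𝕜} (hA : ∀ i j, HasDerivAt (fun s => A s i j) (A' i j) t) :
    HasDerivAt (fun s => (A s).det) ((A t).adjugate * A').trace t := by
  let rowDet : ContinuousMultilinearMap 𝕜 (fun _ : n => n → 𝕜) 𝕜 :=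
    { Matrix.detRowAlternating.toMultilinearMap with
      cont := Continuous.matrix_det continuous_id }
  have hrows : HasDerivAt (fun s i => A s i) (fun i => A' i) t :=
    hasDerivAt_pi.2 fun i => hasDerivAt_pi.2 (hA i)
  have hdet := (rowDet.hasFDerivAt (A t)).comp_hasDerivAt t hrows
  have hderiv : rowDet.linearDeriv (A t) A' = ((A t).adjugate * A').trace :=
    (rowDet.linearDeriv_apply (A t) A').trans (sum_det_updateRow_eq_trace_adjugate_mul (A t) A')
  exact hderiv ▸ hdet

theorem matrix_adjugate_eq_det_smul_of_mul_eq_one {n R : Type*} [Fintype n] [DecidableEq n]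
    [CommRing R] {A B : Matrix n n R} (hAB : A * B = 1) : A.adjugate = A.det • B := by
  calc A.adjugate = A.adjugate * (A * B) := by rw [hAB, mul_one]
    _ = A.det • B := by rw [← mul_assoc, Matrix.adjugate_mul, Matrix.smul_mul, one_mul]

variable {E : Type*} [NormedAddCommGroup E] [NormedSpace 𝕜 E]

theorem hasDerivAt_det_of_comp_eq_id [CompleteSpace 𝕜] [FiniteDimensional 𝕜 E]
    {A : 𝕜 → E →L[𝕜] E} {A' B : E →L[𝕜] E}
    (hA : HasDerivAt A A' t) (hAB : (A t).comp B = .id 𝕜 E) :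
    HasDerivAt (fun s => (A s).det)
      ((A t).det * LinearMap.trace 𝕜 E (A'.comp B).toLinearMap) t := by
  let b := Module.finBasis 𝕜 E
  let M (L : E →L[𝕜] E) := LinearMap.toMatrix b b L.toLinearMap
  have M_comp (L L' : E →L[𝕜] E) : M (L.comp L') = M L * M L' :=
    LinearMap.toMatrix_comp b b b L.toLinearMap L'.toLinearMap
  have M_det (L : E →L[𝕜] E) : (M L).det = L.det := LinearMap.det_toMatrix b L.toLinearMap
  have hentries (i j) : HasDerivAt (fun s => M (A s) i j) (M A' i j) t := by
    have hcol : HasDerivAt (fun s => A s (b j)) (A' (b j)) t := by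
      simpa using hA.clm_apply (hasDerivAt_const t (b j))
    simp only [M, LinearMap.toMatrix_apply]
    exact (LinearMap.toContinuousLinearMap (b.coord i)).hasFDerivAt.comp_hasDerivAt t hcol
  have hinv : M (A t) * M B = 1 := by
    rw [← M_comp, hAB]
    exact LinearMap.toMatrix_id b
  have htrace : ((M (A t)).adjugate * M A').trace =
      (A t).det * LinearMap.trace 𝕜 E (A'.comp B).toLinearMap := by
    rw [matrix_adjugate_eq_det_smul_of_mul_eq_one hinv, Matrix.smul_mul, Matrix.trace_smul,
      smul_eq_mul, M_det, Matrix.trace_mul_comm, ← M_comp, LinearMap.trace_eq_matrix_trace 𝕜 b]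
  simpa only [M_det, htrace] using hasDerivAt_matrix_det hentries

end Jacobi

section Kinematics

variable {𝕜 : Type*} [NontriviallyNormedField 𝕜]
  {E F : Type*} [NormedAddCommGroup E] [NormedSpace 𝕜 E] [NormedAddCommGroup F] [NormedSpace 𝕜 F]

/-- The derivative `D_x η(t, x)` of a motion in the space variable. -/
noncomputable def deformationGradient (η : 𝕜 × E → F) (t : 𝕜) (x : E) : E →L[𝕜] F :=
  fderiv 𝕜 (fun x' => η (t, x')) x

/-- The velocity `∂_t η(t, x)` of the particle labelled `x`. -/
noncomputable def materialVelocity (η : 𝕜 × E → F) (t : 𝕜) (x : E) : F :=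
  deriv (fun s => η (s, x)) t

/-- The velocity at time `t` as a field on physical space. The map `g` recovers the label `x` of
the particle located at `z`, so it stands for the inverse of `η (t, ·)` at the fixed time `t`. -/
noncomputable def spatialVelocity (η : 𝕜 × E → F) (g : F → E) (t : 𝕜) (z : F) : F :=
  materialVelocity η t (g z)

/-- The divergence of a vector field, as the trace of its derivative. It is `0` by convention
where the field is not differentiable. -/
noncomputable def divergence (𝕜 : Type*) [NontriviallyNormedField 𝕜] {E : Type*}
    [NormedAddCommGroup E] [NormedSpace 𝕜 E] (V : E → E) (y : E) : 𝕜 :=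
  LinearMap.trace 𝕜 E (fderiv 𝕜 V y).toLinearMap

variable {η : 𝕜 × E → F} {t : 𝕜} {x : E} {g : F → E} {y : F}

theorem hasFDerivAt_deformationGradient (hη : DifferentiableAt 𝕜 η (t, x)) :
    HasFDerivAt (fun x' => η (t, x')) (deformationGradient η t x) x :=
  (hη.comp x (hasFDerivAt_prodMk_right t x).differentiableAt).hasFDerivAt

theorem deformationGradient_eq_fderiv_comp_inr (hη : DifferentiableAt 𝕜 η (t, x)) :
    deformationGradient η t x = (fderiv 𝕜 η (t, x)).comp (inr 𝕜 𝕜 E) :=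
  (hη.hasFDerivAt.comp x (hasFDerivAt_prodMk_right t x)).fderiv

theorem deformationGradient_comp_fderiv_eq_id (hη : DifferentiableAt 𝕜 η (t, g y))
    (hg : DifferentiableAt 𝕜 g y) (hηg : ∀ᶠ z in 𝓝 y, η (t, g z) = z) :
    (deformationGradient η t (g y)).comp (fderiv 𝕜 g y) = .id 𝕜 F :=
  ((hasFDerivAt_deformationGradient hη).comp y hg.hasFDerivAt).unique
    ((hasFDerivAt_id y).congr_of_eventuallyEq hηg)

theorem det_deformationGradient_ne_zero {η : 𝕜 × E → E} {g : E → E} {y : E}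
    (hη : DifferentiableAt 𝕜 η (t, g y)) (hg : DifferentiableAt 𝕜 g y)
    (hηg : ∀ᶠ z in 𝓝 y, η (t, g z) = z) :
    (deformationGradient η t (g y)).det ≠ 0 := by
  have hdet := congrArg ContinuousLinearMap.det (deformationGradient_comp_fderiv_eq_id hη hg hηg)
  refine left_ne_zero_of_mul_eq_one (b := (fderiv 𝕜 g y).det) ?_
  simpa [ContinuousLinearMap.det] using hdet

theorem materialVelocity_eq_fderiv_apply (hη : DifferentiableAt 𝕜 η (t, x)) :
    materialVelocity η t x = fderiv 𝕜 η (t, x) (1, 0) :=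
  (hη.hasFDerivAt.comp_hasDerivAt t (hasFDerivAt_prodMk_left t x).hasDerivAt).deriv

theorem hasFDerivAt_fderiv_of_contDiffAt_two {f : E → F} (hf : ContDiffAt 𝕜 2 f x) :
    HasFDerivAt (fderiv 𝕜 f) (fderiv 𝕜 (fderiv 𝕜 f) x) x :=
  ((hf.fderiv_right (m := 1) (by norm_num)).differentiableAt one_ne_zero).hasFDerivAt

theorem eventually_differentiableAt_of_contDiffAt_one {f : E → F} (hf : ContDiffAt 𝕜 1 f x) :
    ∀ᶠ x' in 𝓝 x, DifferentiableAt 𝕜 f x' :=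
  (hf.eventually (by simp)).mono fun _ h => h.differentiableAt one_ne_zero

end Kinematics

section MixedPartials

variable {𝕜 : Type*} [RCLike 𝕜]
  {E F : Type*} [NormedAddCommGroup E] [NormedSpace 𝕜 E] [NormedAddCommGroup F] [NormedSpace 𝕜 F]
  {η : 𝕜 × E → F} {g : F → E} {t : 𝕜} {x : E} {y : F}

theorem hasFDerivAt_materialVelocity (hη : ContDiffAt 𝕜 2 η (t, x)) :
    HasFDerivAt (materialVelocity η t)
      ((fderiv 𝕜 (fderiv 𝕜 η) (t, x) (1, 0)).comp (inr 𝕜 𝕜 E)) x := by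
  have hpartial : materialVelocity η t =ᶠ[𝓝 x] fun x' => fderiv 𝕜 η (t, x') (1, 0) :=
    ((Continuous.prodMk_right t).tendsto x).eventually
      (eventually_differentiableAt_of_contDiffAt_one (hη.of_le one_le_two)) |>.mono
      fun _ h => materialVelocity_eq_fderiv_apply h
  have hspace : HasFDerivAt (fun x' => fderiv 𝕜 η (t, x'))
      ((fderiv 𝕜 (fderiv 𝕜 η) (t, x)).comp (inr 𝕜 𝕜 E)) x :=
    (hasFDerivAt_fderiv_of_contDiffAt_two hη).comp x (hasFDerivAt_prodMk_right t x)
  have hsymm : IsSymmSndFDerivAt 𝕜 η (t, x) := hη.isSymmSndFDerivAt (by simp)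
  refine HasFDerivAt.congr_of_eventuallyEq ?_ hpartial
  convert! hspace.clm_apply (hasFDerivAt_const ((1, 0) : 𝕜 × E) x) using 1
  ext v
  simpa using hsymm.eq (1, 0) (0, v)

theorem hasDerivAt_deformationGradient (hη : ContDiffAt 𝕜 2 η (t, x)) :
    HasDerivAt (fun s => deformationGradient η s x) (fderiv 𝕜 (materialVelocity η t) x) t := by
  have hpartial : (fun s => deformationGradient η s x) =ᶠ[𝓝 t]
      fun s => (fderiv 𝕜 η (s, x)).comp (inr 𝕜 𝕜 E) :=
    ((Continuous.prodMk_left x).tendsto t).eventually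
      (eventually_differentiableAt_of_contDiffAt_one (hη.of_le one_le_two)) |>.mono
      fun _ h => deformationGradient_eq_fderiv_comp_inr h
  have htime : HasDerivAt (fun s => fderiv 𝕜 η (s, x)) (fderiv 𝕜 (fderiv 𝕜 η) (t, x) (1, 0)) t :=
    (hasFDerivAt_fderiv_of_contDiffAt_two hη).comp_hasDerivAt t
      (hasFDerivAt_prodMk_left t x).hasDerivAt
  rw [(hasFDerivAt_materialVelocity hη).fderiv]
  refine HasDerivAt.congr_of_eventuallyEq ?_ hpartial
  simpa using htime.clm_comp (hasDerivAt_const t (inr 𝕜 𝕜 E))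

theorem fderiv_spatialVelocity (hη : ContDiffAt 𝕜 2 η (t, g y)) (hg : DifferentiableAt 𝕜 g y) :
    fderiv 𝕜 (spatialVelocity η g t) y =
      (fderiv 𝕜 (materialVelocity η t) (g y)).comp (fderiv 𝕜 g y) :=
  fderiv_comp y (hasFDerivAt_materialVelocity hη).differentiableAt hg

end MixedPartials

section Incompressible

variable {𝕜 : Type*} [RCLike 𝕜] {E : Type*} [NormedAddCommGroup E] [NormedSpace 𝕜 E]
  [FiniteDimensional 𝕜 E] {η : 𝕜 × E → E} {g : E → E} {t : 𝕜} {y : E}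

theorem hasDerivAt_det_deformationGradient (hη : ContDiffAt 𝕜 2 η (t, g y))
    (hg : DifferentiableAt 𝕜 g y) (hηg : ∀ᶠ z in 𝓝 y, η (t, g z) = z) :
    HasDerivAt (fun s => (deformationGradient η s (g y)).det)
      ((deformationGradient η t (g y)).det * divergence 𝕜 (spatialVelocity η g t) y) t := by
  rw [divergence, fderiv_spatialVelocity hη hg]
  exact hasDerivAt_det_of_comp_eq_id (hasDerivAt_deformationGradient hη)
    (deformationGradient_comp_fderiv_eq_id (hη.differentiableAt two_ne_zero) hg hηg)

theorem spatial_velocity_divergence_free_general {c : 𝕜} (hη : ContDiffAt 𝕜 2 η (t, g y))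
    (hg : DifferentiableAt 𝕜 g y) (hηg : ∀ᶠ z in 𝓝 y, η (t, g z) = z)
    (hdet : ∀ᶠ s in 𝓝 t, (deformationGradient η s (g y)).det = c) :
    divergence 𝕜 (spatialVelocity η g t) y = 0 := by
  have hconst : HasDerivAt (fun s => (deformationGradient η s (g y)).det) 0 t :=
    (hasDerivAt_const t c).congr_of_eventuallyEq hdet
  have hEuler := (hasDerivAt_det_deformationGradient hη hg hηg).unique hconst
  exact (mul_eq_zero.1 hEuler).resolve_left
    (det_deformationGradient_ne_zero (hη.differentiableAt two_ne_zero) hg hηg)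

end Incompressible

/-- For a `C²` incompressible motion `η : ℝ × ℝ³ → ℝ³` (each `η (t, ·)` a bijection with
inverse `ηinv t`, invertible spatial derivative of determinant `1`, differentiable inverse),
the spatial velocity field `v (t, y) = ∂ₜ η (t, ηinv t y)` is divergence-free. -/
theorem spatial_velocity_divergence_free
    (η : ℝ × (Fin 3 → ℝ) → (Fin 3 → ℝ))
    (ηinv : ℝ → (Fin 3 → ℝ) → (Fin 3 → ℝ))
    (hC2 : ContDiff ℝ 2 η)
    (hli : ∀ t, Function.LeftInverse (ηinv t) (fun x => η (t, x)))
    (hri : ∀ t, Function.RightInverse (ηinv t) (fun x => η (t, x)))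
    (hinv : ∀ t x, IsUnit
      ((fderiv ℝ (fun x' => η (t, x')) x).toLinearMap : Module.End ℝ (Fin 3 → ℝ)))
    (hdet : ∀ t x, LinearMap.det (fderiv ℝ (fun x' => η (t, x')) x).toLinearMap = 1)
    (hinvdiff : ∀ t, Differentiable ℝ (ηinv t)) :
    ∀ (t : ℝ) (y : Fin 3 → ℝ),
      LinearMap.trace ℝ (Fin 3 → ℝ)
        (fderiv ℝ (fun z => deriv (fun s => η (s, ηinv t z)) t) y).toLinearMap = 0 := by
  intro t y
  exact spatial_velocity_divergence_free_general hC2.contDiffAt (hinvdiff t y)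
    (.of_forall (hri t)) (.of_forall fun s => hdet s (ηinv t y))
end

section
/- Let p₀, …, p_n be affinely independent points in ℝⁿ and let x₀, …, x_n : ℝⁿ → ℝ be the barycentric coordinate functions, i.e. the unique affine maps with x_i(p_j) = δ_{ij}; their gradients ∇x_i are constant vectors. For a < b let γ_{ab}(t) = (1−t) p_a + t p_b. Then ∫₀¹ [ x₀(γ_{ab}(t)) ⟨∇x₁, p_b − p_a⟩ − x₁(γ_{ab}(t)) ⟨∇x₀, p_b − p_a⟩ ] dt equals 1 if (a,b) = (0,1), and equals 0 for every other edge (a,b) with a < b. -/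
/-!
Along a segment from `A` to `B` the affine functions `f` and `g` are affine in the parameter `t`
with constant derivatives `f B - f A` and `g B - g A`, so the integrand of `f dg - g df` is their
Wronskian in `t`. The Wronskian of two affine functions of one variable is constant, equal here to
the determinant `f A * g B - g A * f B`. At the vertices of a simplex this determinant is made of
Kronecker deltas, and only one of its two terms can survive when both edges are oriented by the
order of the vertices.
-/

section WhitneyForm

variable {R V P : Type*} [CommRing R] [AddCommGroup V] [Module R V] [AddTorsor V P]

/-- The Whitney `1`-form `f dg - g df` of two affine functions. For barycentric coordinates
`f = x_i` and `g = x_j` it is the Whitney edge field of `[p_i, p_j]`, with the gradients encoded as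
linear functionals so that no inner product is needed. -/
def whitneyForm (f g : P →ᵃ[R] R) (y : P) : Module.Dual R V :=
  f y • g.linear - g y • f.linear

theorem whitneyForm_apply (f g : P →ᵃ[R] R) (y : P) (v : V) :
    whitneyForm f g y v = f y * g.linear v - g y * f.linear v :=
  rfl

theorem whitneyForm_lineMap_vsub (f g : P →ᵃ[R] R) (A B : P) (t : R) :
    whitneyForm f g (AffineMap.lineMap A B t) (B -ᵥ A) = f A * g B - g A * f B := by
  simp only [whitneyForm_apply, AffineMap.apply_lineMap, AffineMap.lineMap_apply_module,
    AffineMap.linearMap_vsub, vsub_eq_sub, smul_eq_mul]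
  ring

end WhitneyForm

section EdgeIntegral

variable {V P : Type*} [AddCommGroup V] [Module ℝ V] [AddTorsor V P]

theorem integral_whitneyForm_lineMap (f g : P →ᵃ[ℝ] ℝ) (A B : P) :
    ∫ t in (0 : ℝ)..1, whitneyForm f g (AffineMap.lineMap A B t) (B -ᵥ A) =
      f A * g B - g A * f B := by
  simp [whitneyForm_lineMap_vsub]

theorem whitney_edge_duality_general {ι : Type*} [LinearOrder ι] (p : ι → P)
    (x : ι → P →ᵃ[ℝ] ℝ) (hx : ∀ i j, x i (p j) = if i = j then 1 else 0)
    {i j a b : ι} (hij : i < j) (hab : a < b) :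
    ∫ t in (0 : ℝ)..1,
        whitneyForm (x i) (x j) (AffineMap.lineMap (p a) (p b) t) (p b -ᵥ p a) =
      if a = i ∧ b = j then 1 else 0 := by
  have reversed_term_eq_zero : x j (p a) * x i (p b) = 0 := by
    have not_reversed : ¬(j = a ∧ i = b) := by
      rintro ⟨rfl, rfl⟩
      exact hij.asymm hab
    rw [hx, hx, ite_zero_mul_ite_zero, if_neg not_reversed]
  rw [integral_whitneyForm_lineMap, reversed_term_eq_zero, sub_zero, hx, hx,
    ite_zero_mul_ite_zero, mul_one]
  exact if_congr (and_congr eq_comm eq_comm) rfl rfl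

end EdgeIntegral

/-- Duality between Whitney edge fields and edges of a simplex: the line integral of the
Whitney edge field `W_{[p₀,p₁]} = x₀ ∇x₁ − x₁ ∇x₀` along the oriented edge `[p_a, p_b]`
(`a < b`) is `1` if `(a,b) = (0,1)` and `0` otherwise. Here the `x_i` are the barycentric
coordinate (affine) functions of affinely independent points `p₀, …, p_n` in `ℝⁿ`, and
`⟨∇x_i, w⟩` is the linear part of `x_i` applied to `w`. -/
theorem whitney_edge_duality (n : ℕ) (hn : 1 ≤ n)
    (p : Fin (n + 1) → (Fin n → ℝ)) (hp : AffineIndependent ℝ p)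
    (x : Fin (n + 1) → ((Fin n → ℝ) →ᵃ[ℝ] ℝ))
    (hx : ∀ i j, x i (p j) = if i = j then 1 else 0)
    (a b : Fin (n + 1)) (hab : a < b) :
    (∫ t in (0:ℝ)..1,
        (x 0 ((1 - t) • p a + t • p b) * (x 1).linear (p b - p a)
          - x 1 ((1 - t) • p a + t • p b) * (x 0).linear (p b - p a)))
      = if a = 0 ∧ b = 1 then 1 else 0 := by
  obtain ⟨m, rfl⟩ := Nat.exists_eq_add_of_le' hn
  simpa only [whitneyForm_apply, AffineMap.lineMap_apply_module, vsub_eq_sub] using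
    whitney_edge_duality_general p x hx Fin.zero_lt_one hab
end

section
/- Let p₀, p₁, p₂, p₃ be affinely independent points in ℝ³ with barycentric coordinate functions x₀, …, x₃ and constant gradients g_i = ∇x_i, and let W = W_{[p₀,p₁,p₂]} = 2( x₀ g₁ × g₂ + x₁ g₂ × g₀ + x₂ g₀ × g₁ ). For a face [p_a, p_b, p_c] with a < b < c, define its flux integral as ∫_T ⟨ W( p_a + s(p_b − p_a) + t(p_c − p_a) ), (p_b − p_a) × (p_c − p_a) ⟩ ds dt, where T = {(s,t) : s ≥ 0, t ≥ 0, s + t ≤ 1}. Then this flux equals 1 for the face [p₀, p₁, p₂], and equals 0 for each of the other three faces [p₀, p₁, p₃], [p₀, p₂, p₃], [p₁, p₂, p₃] of the tetrahedron. -/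
/-- The constant gradient of an affine function `x : ℝ³ → ℝ`, as a vector. -/
noncomputable def bgrad (x : (Fin 3 → ℝ) →ᵃ[ℝ] ℝ) : Fin 3 → ℝ :=
  fun k => x.linear (Pi.single k 1)

/-- The Whitney face field of the face `[p_a, p_b, p_c]`, for barycentric coordinate
functions `x` of a tetrahedron:
`W = 2 (x_a ∇x_b × ∇x_c + x_b ∇x_c × ∇x_a + x_c ∇x_a × ∇x_b)`. -/
noncomputable def Wface (x : Fin 4 → ((Fin 3 → ℝ) →ᵃ[ℝ] ℝ)) (a b c : Fin 4)
    (y : Fin 3 → ℝ) : Fin 3 → ℝ :=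
  (2 : ℝ) • (x a y • crossProduct (bgrad (x b)) (bgrad (x c))
    + x b y • crossProduct (bgrad (x c)) (bgrad (x a))
    + x c y • crossProduct (bgrad (x a)) (bgrad (x b)))

/-- The flux of the vector field `W` through the oriented face `[p_a, p_b, p_c]`:
`∫_T ⟨W(p_a + s(p_b − p_a) + t(p_c − p_a)), (p_b − p_a) × (p_c − p_a)⟩ ds dt` over the
standard triangle `T = {(s,t) : s ≥ 0, t ≥ 0, s + t ≤ 1}`. -/
noncomputable def faceFlux (W : (Fin 3 → ℝ) → (Fin 3 → ℝ))
    (p : Fin 4 → (Fin 3 → ℝ)) (a b c : Fin 4) : ℝ :=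
  ∫ q in {q : ℝ × ℝ | 0 ≤ q.1 ∧ 0 ≤ q.2 ∧ q.1 + q.2 ≤ 1},
    ∑ i : Fin 3,
      W (p a + q.1 • (p b - p a) + q.2 • (p c - p a)) i
        * crossProduct (p b - p a) (p c - p a) i

/-!
Contracting `W` with `u × v` gives twice the determinant whose rows are `(x_i, dx_i(u), dx_i(v))`.
When `u` and `v` are the edges of a face with vertices `q_j` and `W` is evaluated on that face,
column operations turn this into the constant `2 det (x_i(q_j))`. As the parameter triangle has
area `1/2`, the flux is `det (x_i(q_j))`, which for two faces of the tetrahedron is a minor of the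
identity matrix.
-/

section Determinants

open Matrix

theorem det_submatrix_one_of_strictMono {R ι κ : Type*} [CommRing R] [PartialOrder ι]
    [DecidableEq ι] [LinearOrder κ] [Fintype κ] {σ τ : κ → ι} (hσ : StrictMono σ)
    (hτ : StrictMono τ) :
    ((1 : Matrix ι ι R).submatrix σ τ).det = if σ = τ then 1 else 0 := by
  split_ifs with h
  · rw [h, submatrix_one τ hτ.injective, det_one]
  · obtain ⟨i, hi⟩ : ∃ i, σ i ∉ Set.range τ := by
      by_contra! hsub
      have hle : Set.range σ ⊆ Set.range τ := Set.range_subset_iff.2 hsub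
      have hcard : (Set.range τ).ncard ≤ (Set.range σ).ncard := by
        rw [← Set.image_univ, ← Set.image_univ, Set.ncard_image_of_injective _ hτ.injective,
          Set.ncard_image_of_injective _ hσ.injective]
      exact h ((hσ.range_inj hτ).1 (Set.eq_of_subset_of_ncard_le hle hcard))
    exact det_eq_zero_of_row_eq_zero i fun j => one_apply_ne fun hij => hi ⟨j, hij.symm⟩

theorem det_affineMap_linear_eq_det_vertices {R E : Type*} [CommRing R] [AddCommGroup E]
    [Module R E] (f : Fin 3 → E →ᵃ[R] R) (q : Fin 3 → E) (s t : R) :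
    (of fun i => ![f i (q 0 + s • (q 1 - q 0) + t • (q 2 - q 0)),
      (f i).linear (q 1 - q 0), (f i).linear (q 2 - q 0)]).det =
    (of fun i j => f i (q j)).det := by
  have linear_edge (i j k : Fin 3) : (f i).linear (q j - q k) = f i (q j) - f i (q k) :=
    (f i).linearMap_vsub (q j) (q k)
  have apply_point (i : Fin 3) : f i (q 0 + s • (q 1 - q 0) + t • (q 2 - q 0)) =
      f i (q 0) + s * (f i (q 1) - f i (q 0)) + t * (f i (q 2) - f i (q 0)) := by
    rw [add_assoc, add_comm (q 0), ← vadd_eq_add, (f i).map_vadd, map_add, map_smul, map_smul,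
      linear_edge, linear_edge, vadd_eq_add, smul_eq_mul, smul_eq_mul]
    ring
  simp only [det_fin_three, of_apply, cons_val, linear_edge, apply_point]
  ring

end Determinants

section StandardTriangle

open MeasureTheory Set

theorem volume_real_triangle {r : ℝ} (hr : 0 ≤ r) :
    volume.real {q : ℝ × ℝ | 0 ≤ q.1 ∧ 0 ≤ q.2 ∧ q.1 + q.2 ≤ r} = r ^ 2 / 2 := by
  set T := {q : ℝ × ℝ | 0 ≤ q.1 ∧ 0 ≤ q.2 ∧ q.1 + q.2 ≤ r}
  have hmeas : MeasurableSet T := by measurability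
  have volume_slice (s : ℝ) : volume (Prod.mk s ⁻¹' T) =
      (Icc 0 r).indicator (fun s => ENNReal.ofReal (r - s)) s := by
    by_cases hs : s ∈ Icc 0 r
    · have hslice : Prod.mk s ⁻¹' T = Icc 0 (r - s) := by
        ext t
        simp [T, hs.1, le_sub_iff_add_le']
      rw [hslice, Real.volume_Icc, sub_zero, indicator_of_mem hs]
    · have hslice : Prod.mk s ⁻¹' T = ∅ :=
        eq_empty_of_forall_notMem fun t ⟨hs0, ht0, hst⟩ =>
          hs ⟨hs0, (le_add_of_nonneg_right ht0).trans hst⟩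
      rw [hslice, measure_empty, indicator_of_notMem hs]
  have integral_slices : ∫ s in Icc 0 r, (r - s) = r ^ 2 / 2 := by
    rw [integral_Icc_eq_integral_Ioc, ← intervalIntegral.integral_of_le hr,
      intervalIntegral.integral_sub (by simp) (by simp)]
    simp only [intervalIntegral.integral_const, integral_id, smul_eq_mul]
    ring
  rw [measureReal_def, Measure.volume_eq_prod, Measure.prod_apply hmeas]
  simp_rw [volume_slice]
  rw [lintegral_indicator measurableSet_Icc, ← integral_slices,
    integral_eq_lintegral_of_nonneg_ae]
  · filter_upwards [ae_restrict_mem measurableSet_Icc] with s hs using sub_nonneg.2 hs.2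
  · fun_prop

end StandardTriangle

section WhitneyFlux

open Matrix MeasureTheory

theorem bgrad_dotProduct (f : (Fin 3 → ℝ) →ᵃ[ℝ] ℝ) (v : Fin 3 → ℝ) :
    bgrad f ⬝ᵥ v = f.linear v := by
  conv_rhs => rw [pi_eq_sum_univ' v, map_sum]
  simp only [dotProduct, bgrad, map_smul, smul_eq_mul, mul_comm]

variable (x : Fin 4 → ((Fin 3 → ℝ) →ᵃ[ℝ] ℝ)) (σ : Fin 3 → Fin 4)

theorem Wface_dotProduct_crossProduct (y u v : Fin 3 → ℝ) :
    Wface x (σ 0) (σ 1) (σ 2) y ⬝ᵥ crossProduct u v =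
      2 * (of fun i => ![x (σ i) y, (x (σ i)).linear u, (x (σ i)).linear v]).det := by
  simp only [Wface, smul_dotProduct, add_dotProduct, cross_dot_cross, bgrad_dotProduct,
    det_fin_three, of_apply, cons_val, smul_eq_mul]
  ring

theorem faceFlux_Wface (p : Fin 4 → (Fin 3 → ℝ)) (τ : Fin 3 → Fin 4) :
    faceFlux (Wface x (σ 0) (σ 1) (σ 2)) p (τ 0) (τ 1) (τ 2) =
      (of fun i j => x (σ i) (p (τ j))).det := by
  set D := (of fun i j => x (σ i) (p (τ j))).det
  have integrand_eq (s t : ℝ) :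
      Wface x (σ 0) (σ 1) (σ 2)
          (p (τ 0) + s • (p (τ 1) - p (τ 0)) + t • (p (τ 2) - p (τ 0))) ⬝ᵥ
        crossProduct (p (τ 1) - p (τ 0)) (p (τ 2) - p (τ 0)) = 2 * D := by
    rw [Wface_dotProduct_crossProduct,
      det_affineMap_linear_eq_det_vertices (fun i => x (σ i)) (fun j => p (τ j))]
  calc faceFlux (Wface x (σ 0) (σ 1) (σ 2)) p (τ 0) (τ 1) (τ 2)
      = ∫ _ in {q : ℝ × ℝ | 0 ≤ q.1 ∧ 0 ≤ q.2 ∧ q.1 + q.2 ≤ 1}, 2 * D :=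
        integral_congr_ae (.of_forall fun q => integrand_eq q.1 q.2)
    _ = 1 ^ 2 / 2 * (2 * D) := by
        rw [setIntegral_const, volume_real_triangle zero_le_one, smul_eq_mul]
    _ = D := by ring

end WhitneyFlux

theorem whitney_face_duality_general (p : Fin 4 → (Fin 3 → ℝ))
    (x : Fin 4 → ((Fin 3 → ℝ) →ᵃ[ℝ] ℝ))
    (hx : ∀ i j, x i (p j) = if i = j then 1 else 0)
    {σ τ : Fin 3 → Fin 4} (hσ : StrictMono σ) (hτ : StrictMono τ) :
    faceFlux (Wface x (σ 0) (σ 1) (σ 2)) p (τ 0) (τ 1) (τ 2) = if σ = τ then 1 else 0 := by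
  have minor_eq : (Matrix.of fun i j => x (σ i) (p (τ j))) =
      (1 : Matrix (Fin 4) (Fin 4) ℝ).submatrix σ τ := by
    ext i j
    exact (hx (σ i) (τ j)).trans Matrix.one_apply.symm
  rw [faceFlux_Wface, minor_eq, det_submatrix_one_of_strictMono hσ hτ]

/-- Duality between Whitney face fields and the faces of a tetrahedron: the flux of
`W_{[p₀,p₁,p₂]}` through the face `[p₀,p₁,p₂]` is `1`, and its flux through each of the
other three faces `[p₀,p₁,p₃]`, `[p₀,p₂,p₃]`, `[p₁,p₂,p₃]` is `0`. -/
theorem whitney_face_duality (p : Fin 4 → (Fin 3 → ℝ)) (hp : AffineIndependent ℝ p)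
    (x : Fin 4 → ((Fin 3 → ℝ) →ᵃ[ℝ] ℝ))
    (hx : ∀ i j, x i (p j) = if i = j then 1 else 0) :
    faceFlux (Wface x 0 1 2) p 0 1 2 = 1 ∧
    faceFlux (Wface x 0 1 2) p 0 1 3 = 0 ∧
    faceFlux (Wface x 0 1 2) p 0 2 3 = 0 ∧
    faceFlux (Wface x 0 1 2) p 1 2 3 = 0 := by
  have flux_eq {τ : Fin 3 → Fin 4} (hτ : StrictMono τ) :=
    whitney_face_duality_general p x hx (σ := ![0, 1, 2]) (by decide) hτ
  exact ⟨by simpa using flux_eq (τ := ![0, 1, 2]) (by decide),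
    by simpa using flux_eq (τ := ![0, 1, 3]) (by decide),
    by simpa using flux_eq (τ := ![0, 2, 3]) (by decide),
    by simpa using flux_eq (τ := ![1, 2, 3]) (by decide)⟩
end

section
/- Let p₀, p₁, p₂, p₃ be affinely independent points in ℝ³ with barycentric coordinate functions x₀, …, x₃ and constant gradients g_i = ∇x_i. Then the Whitney face fields of the two faces of the tetrahedron containing the edge [p₀, p₁] sum to a constant field: W_{[p₀,p₁,p₂]}(y) + W_{[p₀,p₁,p₃]}(y) = 2 g₀ × g₁ for every y ∈ ℝ³; that is, their sum equals the curl 2 ∇x₀ × ∇x₁ of the Whitney edge field W_{[p₀,p₁]} = x₀ ∇x₁ − x₁ ∇x₀. -/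
/-!
Fix an edge `[p_a, p_b]` and sum the face fields `W_{abc}` over all vertices `c`. The terms
`c = a` and `c = b` vanish because the cross product is alternating. By bilinearity, what remains
of the sum depends only on `∑ x_c`, which is `1`, and on `∑ ∇x_c`, which is therefore `0`; only the
summands `x_c ∇x_a × ∇x_b` survive.
-/

section AffineMap

variable {ι k V P : Type*} [AddCommGroup V] [AddTorsor V P]

theorem eq_coord_of_apply_eq_ite [Ring k] [Module k V] [DecidableEq ι] (b : AffineBasis ι k P)
    {f : P →ᵃ[k] k} {i : ι} (hf : ∀ j, f (b j) = if i = j then 1 else 0) : f = b.coord i := by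
  refine AffineMap.ext_on b.tot ?_
  rintro _ ⟨j, rfl⟩
  rw [hf, b.coord_apply]

theorem sum_barycentric_eq_one [DivisionRing k] [Module k V] [FiniteDimensional k V] [Fintype ι]
    [DecidableEq ι] {p : ι → P} (hp : AffineIndependent k p)
    (hcard : Fintype.card ι = Module.finrank k V + 1) {x : ι → P →ᵃ[k] k}
    (hx : ∀ i j, x i (p j) = if i = j then 1 else 0) (y : P) : ∑ i, x i y = 1 := by
  let b : AffineBasis ι k P := ⟨p, hp, hp.affineSpan_eq_top_iff_card_eq_finrank_add_one.2 hcard⟩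
  have eq_coord (i : ι) : x i = b.coord i := eq_coord_of_apply_eq_ite b (hx i)
  simpa only [eq_coord] using b.sum_coord_apply_eq_one y

theorem sum_linear_eq_zero_of_sum_eq_const [Ring k] [Module k V] [Fintype ι]
    {W : Type*} [AddCommGroup W] [Module k W] {f : ι → P →ᵃ[k] W} {w : W}
    (hf : ∀ y, ∑ i, f i y = w) (v : V) : ∑ i, (f i).linear v = 0 := by
  obtain ⟨q⟩ := (inferInstance : Nonempty P)
  calc ∑ i, (f i).linear v = ∑ i, (f i (v +ᵥ q) - f i q) := by
        simp only [AffineMap.map_vadd, vadd_eq_add, add_sub_cancel_right]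
    _ = 0 := by rw [Finset.sum_sub_distrib, hf, hf, sub_self]

end AffineMap

theorem sum_cyclic_smul_eq {R M N ι : Type*} [CommSemiring R] [AddCommMonoid M] [Module R M]
    [AddCommMonoid N] [Module R N] [Fintype ι] (B : M →ₗ[R] M →ₗ[R] N) {s : ι → R} {g : ι → M}
    (hs : ∑ i, s i = 1) (hg : ∑ i, g i = 0) (a b : ι) :
    ∑ c, (s a • B (g b) (g c) + s b • B (g c) (g a) + s c • B (g a) (g b)) = B (g a) (g b) := by
  have sum_right : ∑ c, B (g b) (g c) = 0 := by rw [← map_sum, hg, map_zero]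
  have sum_left : ∑ c, B (g c) (g a) = 0 := by
    rw [← LinearMap.sum_apply, ← map_sum, hg, map_zero, LinearMap.zero_apply]
  rw [Finset.sum_add_distrib, Finset.sum_add_distrib, ← Finset.smul_sum, ← Finset.smul_sum,
    ← Finset.sum_smul, sum_right, sum_left, hs, smul_zero, smul_zero, zero_add, zero_add, one_smul]

section Whitney

variable (x : Fin 4 → ((Fin 3 → ℝ) →ᵃ[ℝ] ℝ)) (a b : Fin 4) (y : Fin 3 → ℝ)

theorem Wface_self_left : Wface x a b a y = 0 := by
  rw [Wface, cross_self, smul_zero, add_zero, ← smul_add, cross_anticomm', smul_zero, smul_zero]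

theorem Wface_self_right : Wface x a b b y = 0 := by
  rw [Wface, cross_self, smul_zero, zero_add, ← smul_add, cross_anticomm', smul_zero, smul_zero]

variable {x}

theorem sum_bgrad_eq_zero (hx : ∀ y, ∑ i, x i y = 1) : ∑ i, bgrad (x i) = 0 := by
  ext k
  rw [Finset.sum_apply]
  exact sum_linear_eq_zero_of_sum_eq_const hx (Pi.single k 1)

theorem sum_Wface_eq (hx : ∀ y, ∑ i, x i y = 1) :
    ∑ c, Wface x a b c y = (2 : ℝ) • crossProduct (bgrad (x a)) (bgrad (x b)) := by
  simp only [Wface]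
  rw [← Finset.smul_sum,
    sum_cyclic_smul_eq crossProduct (g := fun i => bgrad (x i)) (hx y) (sum_bgrad_eq_zero hx)]

theorem whitney_face_fields_sum_eq_curl_edge_general (hx : ∀ y, ∑ i, x i y = 1) :
    ∑ c ∈ {a, b}ᶜ, Wface x a b c y
      = (2 : ℝ) • crossProduct (bgrad (x a)) (bgrad (x b)) := by
  rw [← sum_Wface_eq a b y hx]
  refine Finset.sum_subset (Finset.subset_univ _) fun c _ hc => ?_
  obtain rfl | rfl : c = a ∨ c = b := by
    simpa [or_iff_not_imp_left] using hc
  · exact Wface_self_left x c b y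
  · exact Wface_self_right x a c y

end Whitney

/-- For a tetrahedron with affinely independent vertices `p₀, …, p₃`, the Whitney face
fields of the two faces containing the edge `[p₀, p₁]` sum to the constant field
`2 ∇x₀ × ∇x₁`, the curl of the Whitney edge field `W_{[p₀,p₁]} = x₀ ∇x₁ − x₁ ∇x₀`. -/
theorem whitney_face_fields_sum_eq_curl_edge
    (p : Fin 4 → (Fin 3 → ℝ)) (hp : AffineIndependent ℝ p)
    (x : Fin 4 → ((Fin 3 → ℝ) →ᵃ[ℝ] ℝ))
    (hx : ∀ i j, x i (p j) = if i = j then 1 else 0) :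
    ∀ y : Fin 3 → ℝ,
      Wface x 0 1 2 y + Wface x 0 1 3 y
        = (2 : ℝ) • crossProduct (bgrad (x 0)) (bgrad (x 1)) := by
  intro y
  have sum_eq_one := sum_barycentric_eq_one hp (by simp) hx
  have compl_edge : ({0, 1}ᶜ : Finset (Fin 4)) = {2, 3} := by decide
  rw [← whitney_face_fields_sum_eq_curl_edge_general 0 1 y sum_eq_one, compl_edge,
    Finset.sum_pair (by decide)]
end
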